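/- Let α > −1 be real, N ≥ 1, M > 0, let (z_n)_{n≥1} be a strictly increasing sequence of positive reals, and let (ρ_n)_{n≥1} be strictly positive reals such that Σ_{n=1}^∞ z_n^k · ρ_n < ∞ for every integer k ≥ 0. For tuples x = (x_1,…,x_N) and y = (y_1,…,y_N), each of pairwise distinct positive reals, define q^M(x,y) := det_{1≤i,j≤N}[ Σ_{n=1}^∞ (2/M²) · (y_j^{α+1} / x_i^α) · J_α(z_n x_i / M) · J_α(z_n y_j / M) · ρ_n ]. Then, as (x, y) tends to ((0,…,0), (0,…,0)) through such tuples, the ratio q^M(x,y) / ( (∏_{k=1}^N y_k^{2α+1}) · Δ(x²) · Δ(y²) ) converges to [ N! · 2^{N(2N+2α−3)} · M^{2N(N+α)} · ∏_{k=1}^N ( Γ(k)² · Γ(k+α)² ) ]^{−1} · Σ_{n∈ℕ^N} ( ∏_{s=1}^N z_{n_s}^{2α} · ρ_{n_s} ) · ( Δ(z_{n_1}², …, z_{n_N}²) )², where the multi-indexed sum over n = (n_1,…,n_N) ∈ ℕ^N is absolutely summable. -/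

import Mathlib

open Filter

/-- The Bessel function of the first kind, for `x > 0`,
`J_α(x) = Σ_{k=0}^∞ (-1)^k (x/2)^{2k+α} / (k! Γ(k+α+1))`. -/
noncomputable def besselJ (α x : ℝ) : ℝ :=
  ∑' k : ℕ, (-1 : ℝ) ^ k * (x / 2) ^ (2 * (k : ℝ) + α) /
    ((Nat.factorial k : ℝ) * Real.Gamma ((k : ℝ) + α + 1))

/-- The Vandermonde product `Δ(x) = ∏_{1 ≤ j < k ≤ N} (x_k - x_j)`. -/
def vandermondeProd {N : ℕ} (x : Fin N → ℝ) : ℝ :=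
  ∏ p ∈ Finset.univ.filter (fun p : Fin N × Fin N => p.1 < p.2), (x p.2 - x p.1)

/-!
Write `J_α(x) = (x / 2)^α C_α(-(x / 2)²)` with `C_α` entire. Up to explicit powers, the entries of
the matrix become `∑ w_n C_α(-u_n x_i²) C_α(-u_n y_j²)`, where `w_n = z_n^{2α} ρ_n` and
`u_n = z_n² / (2M)²`. Passing from values to divided differences extracts the Vandermonde products
`Δ(x²) Δ(y²)` from the determinant. The divided differences converge to Taylor coefficients by the
mean value theorem, and the limit may be taken under the sums because the derivatives `C_{α+k}` of
`C_α` grow at most linearly on the negative axis. What remains is the Hankel determinant of the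
moments `∑ w_n u_n^{k+l}`, which Andréief's identity turns into the multiple sum.
-/

section DividedDifferences

open Finset Polynomial Topology
open scoped Nat

variable {N : ℕ}

theorem vandermondeProd_eq_det_vandermonde (x : Fin N → ℝ) :
    vandermondeProd x = (Matrix.vandermonde x).det := by
  rw [Matrix.det_vandermonde, vandermondeProd, prod_filter, ← univ_product_univ, prod_product]
  simp_rw [← prod_filter, filter_lt_eq_Ioi]

theorem vandermondeProd_ne_zero {x : Fin N → ℝ} (hx : Function.Injective x) :
    vandermondeProd x ≠ 0 := by
  rw [vandermondeProd_eq_det_vandermonde]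
  exact Matrix.det_vandermonde_ne_zero_iff.2 hx

/-- The matrix of values `∏_{l < k} (x i - x l)` of the Newton basis polynomials at the nodes. -/
noncomputable def newtonMatrix (x : Fin N → ℝ) : Matrix (Fin N) (Fin N) ℝ :=
  Matrix.of fun i k => (Lagrange.nodal (Finset.Iio k) x).eval (x i)

theorem newtonMatrix_apply_eq_zero (x : Fin N → ℝ) {i k : Fin N} (hik : i < k) :
    newtonMatrix x i k = 0 :=
  Lagrange.eval_nodal_at_node (Finset.mem_Iio.2 hik)

theorem det_newtonMatrix (x : Fin N → ℝ) : (newtonMatrix x).det = vandermondeProd x := by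
  rw [vandermondeProd_eq_det_vandermonde, newtonMatrix,
    Matrix.det_eval_matrixOfPolynomials_eq_det_vandermonde x
      (fun k => Lagrange.nodal (Finset.Iio k) x) (fun k => by simp)
      (fun k => Lagrange.nodal_monic)]

/-- The divided differences `f[x 0, …, x k]`, as the coefficients of `f` in the Newton basis of the
nodes `x`. If the nodes are not distinct, the Newton matrix is singular and the value is junk. -/
noncomputable def dividedDiff (f : ℝ → ℝ) (x : Fin N → ℝ) : Fin N → ℝ :=
  (newtonMatrix x)⁻¹.mulVec fun i => f (x i)

theorem newtonMatrix_mulVec_dividedDiff (f : ℝ → ℝ) {x : Fin N → ℝ} (hx : Function.Injective x) :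
    (newtonMatrix x).mulVec (dividedDiff f x) = fun i => f (x i) := by
  have hdet : IsUnit (newtonMatrix x).det := by
    rw [det_newtonMatrix]
    exact (vandermondeProd_ne_zero hx).isUnit
  rw [dividedDiff, Matrix.mulVec_mulVec, Matrix.mul_nonsing_inv _ hdet, Matrix.one_mulVec]

theorem exists_iteratedDeriv_eq_zero_of_strictMono {S : Set ℝ} (hS : S.OrdConnected) {k : ℕ}
    {f : ℝ → ℝ} (hf : ContDiff ℝ k f) {x : Fin (k + 1) → ℝ} (hx : StrictMono x)
    (hxS : ∀ i, x i ∈ S) (hfx : ∀ i, f (x i) = 0) : ∃ ξ ∈ S, iteratedDeriv k f ξ = 0 := by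
  induction k generalizing f with
  | zero => exact ⟨x 0, hxS 0, by simpa using hfx 0⟩
  | succ k ih =>
    have rolle (i : Fin (k + 1)) : ∃ c ∈ Set.Ioo (x i.castSucc) (x i.succ), deriv f c = 0 :=
      exists_deriv_eq_zero (hx i.castSucc_lt_succ) hf.continuous.continuousOn (by rw [hfx, hfx])
    choose c hc hfc using rolle
    have hc_mono : StrictMono c :=
      Fin.strictMono_iff_lt_succ.2 fun i => (hc i.castSucc).2.trans (hc i.succ).1
    have hcS (i : Fin (k + 1)) : c i ∈ S :=
      hS.out (hxS i.castSucc) (hxS i.succ) (Set.Ioo_subset_Icc_self (hc i))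
    rw [iteratedDeriv_succ']
    exact ih (contDiff_succ_iff_deriv.1 hf).2.2 hc_mono hcS hfc

theorem exists_iteratedDeriv_eq_zero {S : Set ℝ} (hS : S.OrdConnected) {k : ℕ} {f : ℝ → ℝ}
    (hf : ContDiff ℝ k f) {s : Finset ℝ} (hs : #s = k + 1) (hsS : ∀ t ∈ s, t ∈ S)
    (hfs : ∀ t ∈ s, f t = 0) : ∃ ξ ∈ S, iteratedDeriv k f ξ = 0 :=
  exists_iteratedDeriv_eq_zero_of_strictMono hS hf (s.orderEmbOfFin hs).strictMono
    (fun i => hsS _ (s.orderEmbOfFin_mem hs i)) fun i => hfs _ (s.orderEmbOfFin_mem hs i)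

theorem iteratedDeriv_eval (p : ℝ[X]) (k : ℕ) :
    iteratedDeriv k (fun t => p.eval t) = fun t => (derivative^[k] p).eval t := by
  induction k generalizing p with
  | zero => rfl
  | succ k ih =>
    have hderiv : deriv (fun t => p.eval t) = fun t => p.derivative.eval t :=
      funext fun _ => p.deriv
    rw [iteratedDeriv_succ', hderiv, ih, Function.iterate_succ_apply]

theorem iteratedDeriv_eval_eq_factorial_mul_coeff {p : ℝ[X]} {k : ℕ} (hp : p.natDegree ≤ k)
    (t : ℝ) : iteratedDeriv k (fun t => p.eval t) t = k ! * p.coeff k := by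
  have hdeg : (derivative^[k] p).natDegree = 0 :=
    Nat.le_zero.1 ((natDegree_iterate_derivative p k).trans (by lia))
  rw [iteratedDeriv_eval, eq_C_of_natDegree_eq_zero hdeg]
  simp [coeff_iterate_derivative, Nat.descFactorial_self]

theorem exists_coeff_eq_iteratedDeriv_div_factorial {S : Set ℝ} (hS : S.OrdConnected) {k : ℕ}
    {f : ℝ → ℝ} (hf : ContDiff ℝ k f) {p : ℝ[X]} (hp : p.natDegree ≤ k) {s : Finset ℝ}
    (hs : #s = k + 1) (hsS : ∀ t ∈ s, t ∈ S) (hfp : ∀ t ∈ s, f t = p.eval t) :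
    ∃ ξ ∈ S, p.coeff k = iteratedDeriv k f ξ / k ! := by
  have hpc : ContDiff ℝ k fun t => p.eval t := by
    simpa using p.contDiff_aeval (𝕜 := ℝ) k
  obtain ⟨ξ, hξS, hξ⟩ := exists_iteratedDeriv_eq_zero hS (hf.sub hpc) hs hsS
    fun t ht => sub_eq_zero.2 (hfp t ht)
  rw [iteratedDeriv_fun_sub hf.contDiffAt hpc.contDiffAt,
    iteratedDeriv_eval_eq_factorial_mul_coeff hp, sub_eq_zero] at hξ
  exact ⟨ξ, hξS, by rw [hξ]; field_simp⟩

/-- The interpolation polynomial of degree at most `k` at the nodes `x 0, …, x k`,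
in Newton form. -/
noncomputable def newtonInterpolant (f : ℝ → ℝ) (x : Fin N → ℝ) (k : Fin N) : ℝ[X] :=
  ∑ j ∈ Finset.Iic k, C (dividedDiff f x j) * Lagrange.nodal (Finset.Iio j) x

theorem natDegree_newtonInterpolant_le (f : ℝ → ℝ) (x : Fin N → ℝ) (k : Fin N) :
    (newtonInterpolant f x k).natDegree ≤ k := by
  refine natDegree_sum_le_of_forall_le _ _ fun j hj => (natDegree_C_mul_le _ _).trans ?_
  simpa using Finset.mem_Iic.1 hj

theorem coeff_newtonInterpolant (f : ℝ → ℝ) (x : Fin N → ℝ) (k : Fin N) :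
    (newtonInterpolant f x k).coeff k = dividedDiff f x k := by
  have hdeg (j : Fin N) : (Lagrange.nodal (Finset.Iio j) x).natDegree = j := by simp
  rw [newtonInterpolant, finsetSum_coeff, sum_eq_single_of_mem k (by simp)]
  · have hlead := (Lagrange.nodal_monic (s := Finset.Iio k) (v := x)).coeff_natDegree
    rw [coeff_C_mul, ← hdeg k, hlead, mul_one]
  · intro j hj hjk
    have hlt : j < k := lt_of_le_of_ne (Finset.mem_Iic.1 hj) hjk
    rw [coeff_C_mul, coeff_eq_zero_of_natDegree_lt (by rw [hdeg]; exact hlt), mul_zero]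

theorem eval_newtonInterpolant (f : ℝ → ℝ) {x : Fin N → ℝ} (hx : Function.Injective x)
    {i k : Fin N} (hik : i ≤ k) : (newtonInterpolant f x k).eval (x i) = f (x i) := by
  calc (newtonInterpolant f x k).eval (x i)
      = ∑ j ∈ Finset.Iic k, newtonMatrix x i j * dividedDiff f x j := by
        simp [newtonInterpolant, newtonMatrix, eval_finsetSum, mul_comm]
    _ = ∑ j, newtonMatrix x i j * dividedDiff f x j := by
        refine sum_subset (subset_univ _) fun j _ hj => ?_
        rw [newtonMatrix_apply_eq_zero x (hik.trans_lt (by simpa using hj)), zero_mul]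
    _ = f (x i) := congrFun (newtonMatrix_mulVec_dividedDiff f hx) i

theorem exists_dividedDiff_eq_iteratedDeriv_div_factorial {S : Set ℝ} (hS : S.OrdConnected)
    {f : ℝ → ℝ} {k : Fin N} (hf : ContDiff ℝ k f) {x : Fin N → ℝ} (hx : Function.Injective x)
    (hxS : ∀ i, x i ∈ S) : ∃ ξ ∈ S, dividedDiff f x k = iteratedDeriv k f ξ / (k : ℕ)! := by
  rw [← coeff_newtonInterpolant]
  refine exists_coeff_eq_iteratedDeriv_div_factorial hS hf (natDegree_newtonInterpolant_le f x k)
    (s := (Finset.Iic k).image x) (by simp [card_image_of_injective _ hx]) ?_ ?_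
  · exact forall_mem_image.2 fun i _ => hxS i
  · exact forall_mem_image.2 fun i hi => (eval_newtonInterpolant f hx (Finset.mem_Iic.1 hi)).symm

theorem abs_dividedDiff_le {S : Set ℝ} (hS : S.OrdConnected) {f : ℝ → ℝ} {k : Fin N}
    (hf : ContDiff ℝ k f) {B : ℝ} (hB : ∀ t ∈ S, |iteratedDeriv k f t| ≤ B) {x : Fin N → ℝ}
    (hx : Function.Injective x) (hxS : ∀ i, x i ∈ S) : |dividedDiff f x k| ≤ B := by
  obtain ⟨ξ, hξS, hξ⟩ := exists_dividedDiff_eq_iteratedDeriv_div_factorial hS hf hx hxS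
  have hfac : (1 : ℝ) ≤ (k : ℕ)! := mod_cast (Nat.factorial_pos _)
  rw [hξ, abs_div, Nat.abs_cast]
  exact (div_le_self (abs_nonneg _) hfac).trans (hB ξ hξS)

theorem tendsto_dividedDiff {f : ℝ → ℝ} {k : Fin N} (hf : ContDiff ℝ k f) (a : ℝ) :
    Tendsto (fun x => dividedDiff f x k) (𝓝[{x | Function.Injective x}] fun _ => a)
      (𝓝 (iteratedDeriv k f a / (k : ℕ)!)) := by
  have hcont : Continuous fun t => iteratedDeriv k f t / (k : ℕ)! := by fun_prop
  refine Metric.tendsto_nhds.2 fun ε hε => ?_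
  obtain ⟨δ, hδ, hclose⟩ := Metric.continuous_iff.1 hcont a ε hε
  filter_upwards [self_mem_nhdsWithin, mem_nhdsWithin_of_mem_nhds (Metric.ball_mem_nhds _ hδ)]
    with x hx hxa
  have hxball (i : Fin N) : x i ∈ Metric.ball a δ := (dist_le_pi_dist x _ i).trans_lt hxa
  obtain ⟨ξ, hξ, hdiff⟩ := exists_dividedDiff_eq_iteratedDeriv_div_factorial
    (convex_ball a δ).ordConnected hf hx hxball
  rw [hdiff]
  exact hclose ξ hξ

end DividedDifferences

section Andreief

open Finset
open scoped Nat

variable {ι R : Type*} [NormedCommRing R] [CompleteSpace R] {N : ℕ}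

theorem summable_norm_and_hasSum_prod_pi {f : Fin N → ι → R}
    (hf : ∀ s, Summable fun n => ‖f s n‖) :
    (Summable fun n : Fin N → ι => ‖∏ s, f s (n s)‖) ∧
      HasSum (fun n : Fin N → ι => ∏ s, f s (n s)) (∏ s, ∑' n, f s n) := by
  induction N with
  | zero => exact ⟨.of_finite, by simp⟩
  | succ N ih =>
    obtain ⟨htail, htail_sum⟩ := ih fun s => hf s.succ
    let e : ι × (Fin N → ι) ≃ (Fin (N + 1) → ι) := Fin.consEquiv fun _ => ι
    have hcons : (fun n : Fin (N + 1) → ι => ∏ s, f s (n s)) ∘ e =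
        fun p => f 0 p.1 * ∏ s, f s.succ (p.2 s) := by
      funext p
      simp [e, Fin.prod_univ_succ, Fin.consEquiv]
    have hcons_norm : (fun n : Fin (N + 1) → ι => ‖∏ s, f s (n s)‖) ∘ e =
        fun p => ‖f 0 p.1 * ∏ s, f s.succ (p.2 s)‖ :=
      congrArg (norm ∘ ·) hcons
    rw [← e.summable_iff, ← e.hasSum_iff, hcons, hcons_norm, Fin.prod_univ_succ]
    have hnorm := (hf 0).mul_norm htail
    have hprod := (hf 0).of_norm.hasSum.mul htail_sum hnorm.of_norm
    exact ⟨hnorm, hprod⟩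

theorem sum_sign_mul_prod_apply_apply {m R : Type*} [Fintype m] [DecidableEq m] [CommRing R]
    (A : Matrix m m R) (σ : Equiv.Perm m) :
    ∑ τ : Equiv.Perm m, (σ.sign : ℤ) * (τ.sign : ℤ) * ∏ s, A (σ s) (τ s) = A.det := by
  have hsign : ((σ.sign : ℤ) : R) * (σ.sign : ℤ) = 1 := by
    rw [← Int.cast_mul, Int.units_coe_mul_self, Int.cast_one]
  calc ∑ τ : Equiv.Perm m, ((σ.sign : ℤ) : R) * (τ.sign : ℤ) * ∏ s, A (σ s) (τ s)
      = (σ.sign : ℤ) * (A.submatrix σ id).det := by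
        rw [← Matrix.det_transpose, Matrix.det_apply', mul_sum]
        simp [mul_assoc]
    _ = A.det := by rw [Matrix.det_permute, ← mul_assoc, hsign, one_mul]

/-- Andréief's identity for sums. -/
theorem hasSum_det_mul_det {f g : Fin N → ι → R}
    (hfg : ∀ i j, Summable fun n => ‖f i n * g j n‖) :
    HasSum (fun n : Fin N → ι =>
        (Matrix.of fun i s => f i (n s)).det * (Matrix.of fun j s => g j (n s)).det)
      (N ! * (Matrix.of fun i j => ∑' n, f i n * g j n).det) := by
  have hterm (σ τ : Equiv.Perm (Fin N)) :
      HasSum (fun n : Fin N → ι =>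
          ((σ.sign : ℤ) : R) * (τ.sign : ℤ) * ∏ s, f (σ s) (n s) * g (τ s) (n s))
        ((σ.sign : ℤ) * (τ.sign : ℤ) * ∏ s, ∑' n, f (σ s) n * g (τ s) n) :=
    (summable_norm_and_hasSum_prod_pi fun s => hfg (σ s) (τ s)).2.mul_left _
  convert hasSum_sum fun σ (_ : σ ∈ univ) => hasSum_sum fun τ (_ : τ ∈ univ) => hterm σ τ using 1
  · funext n
    simp only [Matrix.det_apply', Matrix.of_apply, sum_mul_sum, prod_mul_distrib]
    exact sum_congr rfl fun σ _ => sum_congr rfl fun τ _ => by ring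
  · have hdet := sum_sign_mul_prod_apply_apply (Matrix.of fun i j => ∑' n, f i n * g j n)
    simp only [Matrix.of_apply] at hdet
    simp [hdet, Fintype.card_perm]

theorem hasSum_prod_mul_vandermondeProd_sq {w v : ι → ℝ}
    (hwv : ∀ k : ℕ, Summable fun n => w n * v n ^ k) :
    HasSum (fun n : Fin N → ι => (∏ s, w (n s)) * vandermondeProd (fun s => v (n s)) ^ 2)
      (N ! * (Matrix.of fun i j : Fin N => ∑' n, w n * v n ^ (i + j : ℕ)).det) := by
  have hsum := hasSum_det_mul_det (f := fun (i : Fin N) n => w n * v n ^ (i : ℕ))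
    (g := fun (j : Fin N) n => v n ^ (j : ℕ))
    fun i j => by simpa only [mul_assoc, ← pow_add] using (hwv (i + j)).norm
  simp only [mul_assoc, ← pow_add] at hsum
  refine hsum.congr_fun fun n => ?_
  have hvandermonde : (Matrix.of fun (j : Fin N) s => v (n s) ^ (j : ℕ)).det =
      vandermondeProd fun s => v (n s) := by
    rw [vandermondeProd_eq_det_vandermonde, ← Matrix.det_transpose]
    rfl
  have hweighted := Matrix.det_mul_row (fun s => w (n s))
    (Matrix.of fun (j : Fin N) s => v (n s) ^ (j : ℕ))
  simp only [Matrix.of_apply] at hweighted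
  rw [hweighted, hvandermonde]
  ring

end Andreief

section KernelDeterminants

open Matrix Topology
open scoped Nat

/-- The `N`-tuples of pairwise distinct points of `S`, the tuples along which confluent limits of
determinants are taken. -/
def distinctTuples (N : ℕ) (S : Set ℝ) : Set (Fin N → ℝ) :=
  {x | Function.Injective x ∧ ∀ i, x i ∈ S}

variable {ι : Type*} {N : ℕ}

theorem det_tsum_mul_eq_vandermondeProd_mul {f g : ι → ℝ → ℝ} {x y : Fin N → ℝ}
    (hx : Function.Injective x) (hy : Function.Injective y)
    (hsum : ∀ k l, Summable fun n => dividedDiff (f n) x k * dividedDiff (g n) y l) :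
    (of fun i j => ∑' n, f n (x i) * g n (y j)).det =
      vandermondeProd x * vandermondeProd y *
        (of fun k l => ∑' n, dividedDiff (f n) x k * dividedDiff (g n) y l).det := by
  have hfactor : (of fun i j => ∑' n, f n (x i) * g n (y j)) =
      newtonMatrix x * (of fun k l => ∑' n, dividedDiff (f n) x k * dividedDiff (g n) y l) *
        (newtonMatrix y)ᵀ := by
    ext i j
    have hterm (n : ι) : f n (x i) * g n (y j) = ∑ l, ∑ k,
        newtonMatrix x i k * (dividedDiff (f n) x k * dividedDiff (g n) y l) *
          newtonMatrix y j l := by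
      rw [← congrFun (newtonMatrix_mulVec_dividedDiff (f n) hx) i,
        ← congrFun (newtonMatrix_mulVec_dividedDiff (g n) hy) j, mulVec, mulVec, dotProduct,
        dotProduct, Finset.sum_mul_sum, Finset.sum_comm]
      exact Finset.sum_congr rfl fun l _ => Finset.sum_congr rfl fun k _ => by ring
    have hsum' (k l : Fin N) := ((hsum k l).mul_left (newtonMatrix x i k)).mul_right
      (newtonMatrix y j l)
    simp_rw [of_apply, hterm, mul_apply, transpose_apply, of_apply, Finset.sum_mul]
    rw [Summable.tsum_finsetSum fun l _ => summable_sum fun k _ => hsum' k l]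
    refine Finset.sum_congr rfl fun l _ => ?_
    rw [Summable.tsum_finsetSum fun k _ => hsum' k l]
    simp_rw [tsum_mul_right, tsum_mul_left]
  rw [hfactor, det_mul, det_mul, det_transpose, det_newtonMatrix, det_newtonMatrix]
  ring

variable {f g : ι → ℝ → ℝ} {S T : Set ℝ} {F G : Fin N → ι → ℝ}

theorem abs_dividedDiff_mul_dividedDiff_le (hf : ∀ n, ContDiff ℝ N (f n))
    (hg : ∀ n, ContDiff ℝ N (g n)) (hS : S.OrdConnected) (hT : T.OrdConnected)
    (hF : ∀ (k : Fin N) n, ∀ t ∈ S, |iteratedDeriv k (f n) t| ≤ F k n)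
    (hG : ∀ (l : Fin N) n, ∀ t ∈ T, |iteratedDeriv l (g n) t| ≤ G l n)
    {x y : Fin N → ℝ} (hx : x ∈ distinctTuples N S) (hy : y ∈ distinctTuples N T)
    (k l : Fin N) (n : ι) :
    |dividedDiff (f n) x k * dividedDiff (g n) y l| ≤ F k n * G l n := by
  have hle (m : Fin N) : ((m : ℕ) : WithTop ℕ∞) ≤ N := mod_cast m.is_lt.le
  have hfx := abs_dividedDiff_le hS ((hf n).of_le (hle k)) (hF k n) hx.1 hx.2
  have hgy := abs_dividedDiff_le hT ((hg n).of_le (hle l)) (hG l n) hy.1 hy.2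
  rw [abs_mul]
  exact mul_le_mul hfx hgy (abs_nonneg _) ((abs_nonneg _).trans hfx)

theorem tendsto_tsum_dividedDiff_mul_dividedDiff (hf : ∀ n, ContDiff ℝ N (f n))
    (hg : ∀ n, ContDiff ℝ N (g n)) (hS : S.OrdConnected) (hT : T.OrdConnected)
    (hF : ∀ (k : Fin N) n, ∀ t ∈ S, |iteratedDeriv k (f n) t| ≤ F k n)
    (hG : ∀ (l : Fin N) n, ∀ t ∈ T, |iteratedDeriv l (g n) t| ≤ G l n)
    (a b : ℝ) {k l : Fin N} (hFG : Summable fun n => F k n * G l n) :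
    Tendsto (fun p : (Fin N → ℝ) × (Fin N → ℝ) =>
        ∑' n, dividedDiff (f n) p.1 k * dividedDiff (g n) p.2 l)
      (𝓝[distinctTuples N S ×ˢ distinctTuples N T] (fun _ => a, fun _ => b))
      (𝓝 (∑' n, iteratedDeriv k (f n) a / (k : ℕ)! * (iteratedDeriv l (g n) b / (l : ℕ)!))) := by
  have hle (m : Fin N) : ((m : ℕ) : WithTop ℕ∞) ≤ N := mod_cast m.is_lt.le
  have hdom : ∀ᶠ p : (Fin N → ℝ) × (Fin N → ℝ) in
      𝓝[distinctTuples N S ×ˢ distinctTuples N T] (fun _ => a, fun _ => b),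
      ∀ n, ‖dividedDiff (f n) p.1 k * dividedDiff (g n) p.2 l‖ ≤ F k n * G l n := by
    filter_upwards [self_mem_nhdsWithin] with p hp n
    exact abs_dividedDiff_mul_dividedDiff_le hf hg hS hT hF hG hp.1 hp.2 k l n
  refine tendsto_tsum_of_dominated_convergence hFG (fun n => ?_) hdom
  have hfn : Tendsto (fun x => dividedDiff (f n) x k) (𝓝[distinctTuples N S] fun _ => a) _ :=
    (tendsto_dividedDiff ((hf n).of_le (hle k)) a).mono_left (nhdsWithin_mono _ fun _ hx => hx.1)
  have hgn : Tendsto (fun y => dividedDiff (g n) y l) (𝓝[distinctTuples N T] fun _ => b) _ :=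
    (tendsto_dividedDiff ((hg n).of_le (hle l)) b).mono_left (nhdsWithin_mono _ fun _ hy => hy.1)
  rw [nhdsWithin_prod_eq]
  exact (hfn.comp tendsto_fst).mul (hgn.comp tendsto_snd)

theorem tendsto_det_tsum_mul_div_vandermondeProd (hf : ∀ n, ContDiff ℝ N (f n))
    (hg : ∀ n, ContDiff ℝ N (g n)) (hS : S.OrdConnected) (hT : T.OrdConnected)
    (hF : ∀ (k : Fin N) n, ∀ t ∈ S, |iteratedDeriv k (f n) t| ≤ F k n)
    (hG : ∀ (l : Fin N) n, ∀ t ∈ T, |iteratedDeriv l (g n) t| ≤ G l n)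
    (hFG : ∀ k l, Summable fun n => F k n * G l n) (a b : ℝ) :
    Tendsto (fun p : (Fin N → ℝ) × (Fin N → ℝ) =>
        (of fun i j => ∑' n, f n (p.1 i) * g n (p.2 j)).det /
          (vandermondeProd p.1 * vandermondeProd p.2))
      (𝓝[distinctTuples N S ×ˢ distinctTuples N T] (fun _ => a, fun _ => b))
      (𝓝 (of fun k l : Fin N =>
        ∑' n, iteratedDeriv k (f n) a / (k : ℕ)! * (iteratedDeriv l (g n) b / (l : ℕ)!)).det) := by
  have hlim : Tendsto (fun p : (Fin N → ℝ) × (Fin N → ℝ) =>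
      (of fun k l => ∑' n, dividedDiff (f n) p.1 k * dividedDiff (g n) p.2 l).det)
      (𝓝[distinctTuples N S ×ˢ distinctTuples N T] (fun _ => a, fun _ => b))
      (𝓝 (of fun k l : Fin N => ∑' n,
        iteratedDeriv k (f n) a / (k : ℕ)! * (iteratedDeriv l (g n) b / (l : ℕ)!)).det) :=
    (continuous_id.matrix_det.tendsto _).comp <| tendsto_pi_nhds.2 fun k => tendsto_pi_nhds.2
      fun l => tendsto_tsum_dividedDiff_mul_dividedDiff hf hg hS hT hF hG a b (hFG k l)
  refine hlim.congr' ?_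
  filter_upwards [self_mem_nhdsWithin] with p ⟨hx, hy⟩
  have hsum (k l : Fin N) :
      Summable fun n => dividedDiff (f n) p.1 k * dividedDiff (g n) p.2 l :=
    .of_norm_bounded (hFG k l) (abs_dividedDiff_mul_dividedDiff_le hf hg hS hT hF hG hx hy k l)
  rw [det_tsum_mul_eq_vandermondeProd_mul hx.1 hy.1 hsum, mul_div_cancel_left₀]
  exact mul_ne_zero (vandermondeProd_ne_zero hx.1) (vandermondeProd_ne_zero hy.1)

end KernelDeterminants

section BesselClifford

open scoped Nat ContDiff

/-- The Taylor coefficient `1 / (k! Γ(k + β + 1))` of the Bessel–Clifford function. -/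
noncomputable def besselCliffordCoeff (β : ℝ) (k : ℕ) : ℝ :=
  ((k ! : ℝ) * Real.Gamma (k + β + 1))⁻¹

/-- The Bessel–Clifford function `C_β(t) = ∑ t^k / (k! Γ(k + β + 1))`: the entire function with
`J_β(x) = (x / 2)^β C_β(-(x / 2)^2)`. -/
noncomputable def besselClifford (β t : ℝ) : ℝ :=
  ∑' k : ℕ, besselCliffordCoeff β k * t ^ k

variable {β : ℝ}

theorem besselCliffordCoeff_pos (hβ : -1 < β) (k : ℕ) : 0 < besselCliffordCoeff β k := by
  have hΓ : 0 < Real.Gamma (k + β + 1) :=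
    Real.Gamma_pos_of_pos (by linarith [k.cast_nonneg (α := ℝ)])
  unfold besselCliffordCoeff
  positivity

theorem succ_mul_besselCliffordCoeff_succ (β : ℝ) (k : ℕ) :
    (k + 1) * besselCliffordCoeff β (k + 1) = besselCliffordCoeff (β + 1) k := by
  have harg : ((k + 1 : ℕ) : ℝ) + β + 1 = k + (β + 1) + 1 := by push_cast; ring
  rw [besselCliffordCoeff, besselCliffordCoeff, harg, Nat.factorial_succ]
  push_cast
  field_simp

theorem besselCliffordCoeff_eq_mul (hβ : -1 < β) (k : ℕ) :
    besselCliffordCoeff β k = (k + β + 1) * besselCliffordCoeff (β + 1) k := by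
  have hpos : 0 < k + β + 1 := by linarith [k.cast_nonneg (α := ℝ)]
  rw [besselCliffordCoeff, besselCliffordCoeff, ← add_assoc (k : ℝ), Real.Gamma_add_one hpos.ne']
  field_simp

theorem exists_besselCliffordCoeff_le :
    ∃ c, ∀ β : ℝ, -1 < β → ∀ k : ℕ, besselCliffordCoeff β k ≤ c / k ! := by
  obtain ⟨m, hm, hmin⟩ := Real.exists_isMinOn_Gamma_Ioi
  refine ⟨(Real.Gamma m)⁻¹, fun β hβ k => ?_⟩
  have hpos : 0 < k + β + 1 := by linarith [k.cast_nonneg (α := ℝ)]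
  have hΓm : 0 < Real.Gamma m := Real.Gamma_pos_of_pos (zero_lt_one.trans hm.1)
  have hΓ : Real.Gamma m ≤ Real.Gamma (k + β + 1) := hmin hpos
  rw [besselCliffordCoeff, mul_inv, div_eq_inv_mul]
  gcongr

theorem summable_besselCliffordCoeff_mul_pow (hβ : -1 < β) (t : ℝ) :
    Summable fun k => besselCliffordCoeff β k * t ^ k := by
  obtain ⟨c, hc⟩ := exists_besselCliffordCoeff_le
  refine .of_norm_bounded ((Real.summable_pow_div_factorial |t|).mul_left c) fun k => ?_
  rw [Real.norm_eq_abs, abs_mul, abs_of_pos (besselCliffordCoeff_pos hβ k), abs_pow]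
  calc besselCliffordCoeff β k * |t| ^ k ≤ c / k ! * |t| ^ k := by gcongr; exact hc β hβ k
    _ = c * (|t| ^ k / k !) := by ring

theorem besselClifford_eq_add_tsum (hβ : -1 < β) (t : ℝ) :
    besselClifford β t =
      besselCliffordCoeff β 0 + ∑' k : ℕ, besselCliffordCoeff β (k + 1) * t ^ (k + 1) := by
  rw [besselClifford, (summable_besselCliffordCoeff_mul_pow hβ t).tsum_eq_zero_add, pow_zero,
    mul_one]

theorem besselClifford_zero_right (β : ℝ) : besselClifford β 0 = besselCliffordCoeff β 0 := by
  rw [besselClifford, tsum_eq_single 0 fun k hk => by simp [hk]]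
  simp

theorem hasDerivAt_besselClifford (hβ : -1 < β) (t : ℝ) :
    HasDerivAt (besselClifford β) (besselClifford (β + 1) t) t := by
  have hβ' : -1 < β + 1 := by linarith
  have hterm (k : ℕ) (s : ℝ) : HasDerivAt (fun s => besselCliffordCoeff β (k + 1) * s ^ (k + 1))
      (besselCliffordCoeff (β + 1) k * s ^ k) s := by
    convert! (hasDerivAt_pow (k + 1) s).const_mul (besselCliffordCoeff β (k + 1)) using 1
    rw [← succ_mul_besselCliffordCoeff_succ]
    push_cast
    ring_nf
  have hbound (k : ℕ) (s : ℝ) (hs : s ∈ Metric.ball (0 : ℝ) (|t| + 1)) :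
      ‖besselCliffordCoeff (β + 1) k * s ^ k‖ ≤ besselCliffordCoeff (β + 1) k * (|t| + 1) ^ k := by
    rw [norm_mul, norm_pow, Real.norm_of_nonneg (besselCliffordCoeff_pos hβ' k).le]
    have := (besselCliffordCoeff_pos hβ' k).le
    gcongr
    exact (mem_ball_zero_iff.1 hs).le
  have htail := hasDerivAt_tsum_of_isPreconnected
    (summable_besselCliffordCoeff_mul_pow hβ' (|t| + 1)) Metric.isOpen_ball
    (convex_ball _ _).isPreconnected (fun k s _ => hterm k s) hbound
    (Metric.mem_ball_self (by positivity)) (by simp) (mem_ball_zero_iff.2 (by simp : ‖t‖ < |t| + 1))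
  rw [funext (besselClifford_eq_add_tsum hβ)]
  exact htail.const_add _

theorem iteratedDeriv_besselClifford (hβ : -1 < β) (k : ℕ) :
    iteratedDeriv k (besselClifford β) = besselClifford (β + k) := by
  induction k with
  | zero => simp
  | succ k ih =>
    have hβk : -1 < β + k := by linarith [k.cast_nonneg (α := ℝ)]
    rw [iteratedDeriv_succ, ih, funext fun t => (hasDerivAt_besselClifford hβk t).deriv, add_assoc,
      Nat.cast_succ]

theorem contDiff_besselClifford (hβ : -1 < β) : ContDiff ℝ ∞ (besselClifford β) := by
  refine contDiff_of_differentiable_iteratedDeriv fun k _ => ?_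
  have hβk : -1 < β + k := by linarith [k.cast_nonneg (α := ℝ)]
  rw [iteratedDeriv_besselClifford hβ]
  exact fun t => (hasDerivAt_besselClifford hβk t).differentiableAt

theorem besselClifford_recurrence (hβ : -1 < β) (t : ℝ) :
    besselClifford β t = (β + 1) * besselClifford (β + 1) t + t * besselClifford (β + 2) t := by
  have hβ' : -1 < β + 1 := by linarith
  have hβ'' : -1 < β + 1 + 1 := by linarith
  have hsum := summable_besselCliffordCoeff_mul_pow hβ' t
  have hterm (k : ℕ) : besselCliffordCoeff β (k + 1) * t ^ (k + 1) =
      (β + 1) * (besselCliffordCoeff (β + 1) (k + 1) * t ^ (k + 1)) +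
        t * (besselCliffordCoeff (β + 1 + 1) k * t ^ k) := by
    rw [besselCliffordCoeff_eq_mul hβ, ← succ_mul_besselCliffordCoeff_succ (β + 1)]
    push_cast
    ring
  rw [besselClifford_eq_add_tsum hβ, besselClifford_eq_add_tsum hβ', tsum_congr hterm,
    (((summable_nat_add_iff 1).2 hsum).mul_left _).tsum_add
      ((summable_besselCliffordCoeff_mul_pow hβ'' t).mul_left t), tsum_mul_left, tsum_mul_left,
    besselCliffordCoeff_eq_mul hβ, show β + 2 = β + 1 + 1 by ring, besselClifford]
  push_cast
  ring

theorem abs_besselClifford_le_of_neg_half_le (hβ : -(1 / 2) ≤ β) {t : ℝ} (ht : t ≤ 0) :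
    |besselClifford β t| ≤ besselClifford β 0 := by
  have hβ₁ : -1 < β := by linarith
  let energy (s : ℝ) : ℝ := besselClifford β s ^ 2 - s * besselClifford (β + 1) s ^ 2
  have hderiv (s : ℝ) : HasDerivAt energy ((2 * β + 1) * besselClifford (β + 1) s ^ 2) s := by
    have hC := hasDerivAt_besselClifford hβ₁ s
    have hC' := hasDerivAt_besselClifford (by linarith : -1 < β + 1) s
    convert! (hC.pow 2).sub ((hasDerivAt_id s).mul (hC'.pow 2)) using 1
    rw [besselClifford_recurrence hβ₁ s, add_assoc β 1 1, one_add_one_eq_two]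
    simp only [id_eq, Pi.pow_apply]
    ring
  have hmono : Monotone energy := monotone_of_hasDerivAt_nonneg hderiv fun s =>
    mul_nonneg (by linarith) (sq_nonneg _)
  have henergy : energy t ≤ energy 0 := hmono ht
  have hzero : 0 ≤ besselClifford β 0 := by
    rw [besselClifford_zero_right]
    exact (besselCliffordCoeff_pos hβ₁ 0).le
  refine abs_le_of_sq_le_sq ?_ hzero
  nlinarith [sq_nonneg (besselClifford (β + 1) t)]

theorem abs_besselClifford_le (hβ : -1 < β) {t : ℝ} (ht : t ≤ 0) :
    |besselClifford β t| ≤ besselClifford β 0 - t * besselClifford (β + 2) 0 := by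
  have hβ' : 0 < β + 1 := by linarith
  calc |besselClifford β t|
      = |(β + 1) * besselClifford (β + 1) t + t * besselClifford (β + 2) t| := by
        rw [besselClifford_recurrence hβ]
    _ ≤ (β + 1) * |besselClifford (β + 1) t| + -t * |besselClifford (β + 2) t| := by
        refine (abs_add_le _ _).trans_eq ?_
        rw [abs_mul, abs_mul, abs_of_pos hβ', abs_of_nonpos ht]
    _ ≤ (β + 1) * besselClifford (β + 1) 0 + -t * besselClifford (β + 2) 0 := by
        have h₁ := abs_besselClifford_le_of_neg_half_le (by linarith : -(1 / 2) ≤ β + 1) ht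
        have h₂ := abs_besselClifford_le_of_neg_half_le (by linarith : -(1 / 2) ≤ β + 2) ht
        have := neg_nonneg.2 ht
        gcongr
    _ = besselClifford β 0 - t * besselClifford (β + 2) 0 := by
        rw [besselClifford_recurrence hβ 0]
        ring

theorem besselJ_eq_rpow_mul_besselClifford (α : ℝ) {x : ℝ} (hx : 0 < x) :
    besselJ α x = (x / 2) ^ α * besselClifford α (-(x / 2) ^ 2) := by
  rw [besselJ, besselClifford, ← tsum_mul_left]
  refine tsum_congr fun k => ?_
  rw [Real.rpow_add (by positivity), mul_comm (2 : ℝ), Real.rpow_natCast_mul (by positivity),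
    Real.rpow_ofNat, besselCliffordCoeff, neg_pow ((x / 2) ^ 2), ← pow_mul, ← pow_mul, mul_comm k 2]
  ring

end BesselClifford

section BesselCliffordKernel

open Matrix Topology
open scoped Nat ContDiff

theorem det_of_mul_mul_apply {m R : Type*} [Fintype m] [DecidableEq m] [CommRing R] (a b : m → R)
    (A : Matrix m m R) :
    (of fun i j => a i * b j * A i j).det = (∏ i, a i) * (∏ j, b j) * A.det := by
  simp_rw [mul_assoc]
  exact (det_mul_column a _).trans (congrArg _ (det_mul_row b A))

variable {α : ℝ}

theorem iteratedDeriv_besselClifford_const_mul (hα : -1 < α) (c : ℝ) (k : ℕ) :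
    iteratedDeriv k (fun t => besselClifford α (c * t)) =
      fun t => c ^ k * besselClifford (α + k) (c * t) := by
  rw [iteratedDeriv_comp_const_mul ((contDiff_besselClifford hα).of_le (mod_cast le_top)),
    iteratedDeriv_besselClifford hα]

theorem besselClifford_add_natCast_zero_div_factorial (α : ℝ) (k : ℕ) :
    besselClifford (α + k) 0 / k ! = besselCliffordCoeff α k := by
  rw [besselClifford_zero_right, besselCliffordCoeff, besselCliffordCoeff, mul_inv, mul_inv,
    Nat.cast_zero, zero_add, Nat.factorial_zero, add_comm α]
  simp only [Nat.cast_one, inv_one]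
  ring

theorem abs_iteratedDeriv_besselClifford_const_mul_le (hα : -1 < α) {u : ℝ} (hu : 0 ≤ u) (k : ℕ)
    {t : ℝ} (ht : t ∈ Set.Icc (0 : ℝ) 1) :
    |iteratedDeriv k (fun t => besselClifford α (-u * t)) t| ≤
      u ^ k * (besselClifford (α + k) 0 + u * besselClifford (α + k + 2) 0) := by
  have hαk : -1 < α + k := by linarith [k.cast_nonneg (α := ℝ)]
  have hut : 0 ≤ u * t := mul_nonneg hu ht.1
  have hC : 0 < besselClifford (α + k + 2) 0 := by
    rw [besselClifford_zero_right]
    exact besselCliffordCoeff_pos (by linarith) 0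
  rw [iteratedDeriv_besselClifford_const_mul hα, abs_mul, abs_pow, abs_neg, abs_of_nonneg hu]
  gcongr
  calc |besselClifford (α + k) (-u * t)|
      ≤ besselClifford (α + k) 0 - -u * t * besselClifford (α + k + 2) 0 :=
        abs_besselClifford_le hαk (by linarith)
    _ ≤ besselClifford (α + k) 0 + u * besselClifford (α + k + 2) 0 := by
        nlinarith [mul_le_of_le_one_right hu ht.2]

variable {ι : Type*} {w u : ι → ℝ}

theorem summable_abs_mul_pow_mul_add_mul (hu : ∀ n, 0 ≤ u n)
    (hwu : ∀ k : ℕ, Summable fun n => w n * u n ^ k) (k l : ℕ) (a b c d : ℝ) :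
    Summable fun n => |w n| * (u n ^ k * (a + u n * b)) * (u n ^ l * (c + u n * d)) := by
  have habs (m : ℕ) : Summable fun n => |w n| * u n ^ m :=
    (hwu m).abs.congr fun n => by rw [abs_mul, abs_of_nonneg (pow_nonneg (hu n) m)]
  refine ((((habs (k + l)).mul_left (a * c)).add ((habs (k + l + 1)).mul_left (a * d + b * c))).add
    ((habs (k + l + 2)).mul_left (b * d))).congr fun n => ?_
  ring

theorem det_tsum_iteratedDeriv_besselClifford (hα : -1 < α) (N : ℕ) (w u : ι → ℝ) :
    (of fun k l : Fin N => ∑' n,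
        iteratedDeriv k (fun t => w n * besselClifford α (-u n * t)) 0 / (k : ℕ)! *
          (iteratedDeriv l (fun t => besselClifford α (-u n * t)) 0 / (l : ℕ)!)).det =
      (∏ k : Fin N, besselCliffordCoeff α k ^ 2) *
        (of fun k l : Fin N => ∑' n, w n * u n ^ (k + l : ℕ)).det := by
  let c (k : Fin N) : ℝ := (-1) ^ (k : ℕ) * besselCliffordCoeff α k
  have hderiv (k : Fin N) (n : ι) :
      iteratedDeriv k (fun t => besselClifford α (-u n * t)) 0 / (k : ℕ)! =
        c k * u n ^ (k : ℕ) := by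
    simp_rw [iteratedDeriv_besselClifford_const_mul hα, mul_zero, mul_div_assoc,
      besselClifford_add_natCast_zero_div_factorial, neg_pow (u n), c]
    ring
  have hentry (k l : Fin N) :
      ∑' n, iteratedDeriv k (fun t => w n * besselClifford α (-u n * t)) 0 / (k : ℕ)! *
        (iteratedDeriv l (fun t => besselClifford α (-u n * t)) 0 / (l : ℕ)!) =
      c k * c l * ∑' n, w n * u n ^ (k + l : ℕ) := by
    simp_rw [iteratedDeriv_const_mul_field, mul_div_assoc, hderiv, ← tsum_mul_left]
    exact tsum_congr fun n => by ring
  have hsign (k : Fin N) : c k * c k = besselCliffordCoeff α k ^ 2 := by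
    rw [← sq, mul_pow, ← pow_mul, mul_comm (k : ℕ), pow_mul, neg_one_sq, one_pow, one_mul]
  simp_rw [hentry]
  refine (det_of_mul_mul_apply c c (of fun k l => ∑' n, w n * u n ^ (k + l : ℕ))).trans ?_
  simp_rw [← Finset.prod_mul_distrib, hsign]

theorem tendsto_det_tsum_besselClifford_div_vandermondeProd (hα : -1 < α) (N : ℕ)
    (hu : ∀ n, 0 ≤ u n) (hwu : ∀ k : ℕ, Summable fun n => w n * u n ^ k) :
    Tendsto (fun p : (Fin N → ℝ) × (Fin N → ℝ) =>
        (of fun i j => ∑' n, w n * besselClifford α (-u n * p.1 i) *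
          besselClifford α (-u n * p.2 j)).det / (vandermondeProd p.1 * vandermondeProd p.2))
      (𝓝[distinctTuples N (Set.Icc 0 1) ×ˢ distinctTuples N (Set.Icc 0 1)]
        (fun _ => 0, fun _ => 0))
      (𝓝 ((∏ k : Fin N, besselCliffordCoeff α k ^ 2) *
        (of fun k l : Fin N => ∑' n, w n * u n ^ (k + l : ℕ)).det)) := by
  have hsmooth (n : ι) : ContDiff ℝ N fun t => besselClifford α (-u n * t) :=
    ((contDiff_besselClifford hα).of_le (mod_cast le_top)).comp (contDiff_const.mul contDiff_id)
  have hlim := tendsto_det_tsum_mul_div_vandermondeProd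
    (f := fun n t => w n * besselClifford α (-u n * t))
    (g := fun n t => besselClifford α (-u n * t))
    (F := fun k n => |w n| * (u n ^ (k : ℕ) *
      (besselClifford (α + k) 0 + u n * besselClifford (α + k + 2) 0)))
    (fun n => contDiff_const.mul (hsmooth n)) hsmooth Set.ordConnected_Icc Set.ordConnected_Icc
    (fun k n t ht => by
      rw [iteratedDeriv_const_mul_field, abs_mul]
      gcongr
      exact abs_iteratedDeriv_besselClifford_const_mul_le hα (hu n) k ht)
    (fun l n t ht => abs_iteratedDeriv_besselClifford_const_mul_le hα (hu n) l ht)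
    (fun k l => summable_abs_mul_pow_mul_add_mul hu hwu k l _ _ _ _) 0 0
  rwa [det_tsum_iteratedDeriv_besselClifford hα] at hlim

end BesselCliffordKernel

section BesselKernel

open Matrix Topology
open scoped Nat

theorem summable_rpow_mul_of_summable_pow_mul {ι : Type*} {z ρ : ι → ℝ} {c : ℝ} (hc : 0 < c)
    (hz : ∀ n, c ≤ z n) (hsum : ∀ k : ℕ, Summable fun n => z n ^ k * ρ n) (s : ℝ) :
    Summable fun n => z n ^ s * ρ n := by
  obtain ⟨m, hsm⟩ := exists_nat_ge s
  refine .of_norm_bounded ((hsum m).norm.mul_left (c ^ s / c ^ m)) fun n => ?_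
  have hzn : 0 < z n := hc.trans_le (hz n)
  have hpow : z n ^ s ≤ c ^ s / c ^ m * z n ^ m := by
    have hratio := Real.rpow_le_rpow_of_exponent_le ((one_le_div hc).2 (hz n)) hsm
    rw [Real.rpow_natCast, Real.div_rpow hzn.le hc.le, div_pow,
      div_le_iff₀ (Real.rpow_pos_of_pos hc s)] at hratio
    exact hratio.trans_eq (by ring)
  calc ‖z n ^ s * ρ n‖ = z n ^ s * |ρ n| := by
        rw [Real.norm_eq_abs, abs_mul, abs_of_pos (Real.rpow_pos_of_pos hzn s)]
    _ ≤ c ^ s / c ^ m * z n ^ m * |ρ n| := by gcongr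
    _ = c ^ s / c ^ m * ‖z n ^ m * ρ n‖ := by
        rw [Real.norm_eq_abs, abs_mul, abs_of_pos (pow_pos hzn m), mul_assoc]

theorem tendsto_sq_distinctTuples (N : ℕ) :
    Tendsto (fun (x : Fin N → ℝ) k => x k ^ 2) (𝓝[distinctTuples N (Set.Ioi 0)] 0)
      (𝓝[distinctTuples N (Set.Icc 0 1)] fun _ => 0) := by
  have hcont : Continuous fun (x : Fin N → ℝ) k => x k ^ 2 := by fun_prop
  have hlim : Tendsto (fun (x : Fin N → ℝ) k => x k ^ 2) (𝓝 0) (𝓝 fun _ => 0) := by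
    simpa using hcont.tendsto 0
  refine tendsto_nhdsWithin_iff.2 ⟨hlim.mono_left nhdsWithin_le_nhds, ?_⟩
  have hsmall : ∀ᶠ x : Fin N → ℝ in 𝓝[distinctTuples N (Set.Ioi 0)] 0, ∀ k, x k < 1 :=
    eventually_all.2 fun k => nhdsWithin_le_nhds <|
      (continuous_apply k).continuousAt.eventually_lt_const zero_lt_one
  filter_upwards [self_mem_nhdsWithin, hsmall] with x hx hx_lt
  have hpos (k : Fin N) : 0 < x k := hx.2 k
  refine ⟨fun j k hjk => hx.1 ?_, fun k => ⟨sq_nonneg _, ?_⟩⟩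
  · exact (pow_left_inj₀ (hpos j).le (hpos k).le two_ne_zero).1 hjk
  · exact pow_le_one₀ (hpos k).le (hx_lt k).le

/-- The entry `∑ (2 / M²) (y^(α+1) / x^α) J_α(z_n x / M) J_α(z_n y / M) ρ_n` of the matrix whose
determinant is `q^M`. -/
noncomputable def besselKernel {ι : Type*} (α M : ℝ) (z ρ : ι → ℝ) (x y : ℝ) : ℝ :=
  ∑' n, 2 / M ^ 2 * (y ^ (α + 1) / x ^ α) * besselJ α (z n * x / M) * besselJ α (z n * y / M) * ρ n

/-- The constant that remains when the Bessel functions in `besselKernel` are replaced by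
Bessel–Clifford functions. -/
noncomputable def besselKernelScale (α M : ℝ) : ℝ :=
  2 / M ^ 2 / (2 * M) ^ (2 * α)

theorem besselKernel_eq {ι : Type*} (α : ℝ) {M : ℝ} (hM : 0 < M) {z : ι → ℝ}
    (hz : ∀ n, 0 < z n) (ρ : ι → ℝ) {x y : ℝ} (hx : 0 < x) (hy : 0 < y) :
    besselKernel α M z ρ x y = besselKernelScale α M * y ^ (2 * α + 1) *
      ∑' n, z n ^ (2 * α) * ρ n * besselClifford α (-(z n ^ 2 / (2 * M) ^ 2) * x ^ 2) *
        besselClifford α (-(z n ^ 2 / (2 * M) ^ 2) * y ^ 2) := by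
  have hdouble {t : ℝ} (ht : 0 < t) : t ^ (2 * α) = t ^ α * t ^ α := by
    rw [two_mul, Real.rpow_add ht]
  have hJ (n : ι) {t : ℝ} (ht : 0 < t) : besselJ α (z n * t / M) =
      z n ^ α * t ^ α / (2 * M) ^ α * besselClifford α (-(z n ^ 2 / (2 * M) ^ 2) * t ^ 2) := by
    have hzn := hz n
    have harg : (z n * t / (2 * M)) ^ 2 = z n ^ 2 / (2 * M) ^ 2 * t ^ 2 := by ring
    rw [besselJ_eq_rpow_mul_besselClifford α (by positivity), div_div, mul_comm M, harg,
      Real.div_rpow (by positivity) (by positivity), Real.mul_rpow hzn.le ht.le, neg_mul]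
  have hxα : x ^ α ≠ 0 := (Real.rpow_pos_of_pos hx α).ne'
  rw [besselKernel, besselKernelScale, ← tsum_mul_left]
  refine tsum_congr fun n => ?_
  rw [hJ n hx, hJ n hy, Real.rpow_add hy, Real.rpow_add hy, hdouble (hz n), hdouble hy,
    hdouble (by positivity)]
  field_simp

theorem prod_rpow_add_four_mul {b : ℝ} (hb : 0 < b) (c : ℝ) (N : ℕ) :
    ∏ k : Fin N, b ^ (c + 4 * (k : ℕ)) = b ^ (N * (2 * N + c - 2)) := by
  induction N with
  | zero => simp
  | succ N ih =>
    rw [Fin.prod_univ_castSucc]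
    simp only [Fin.val_castSucc, Fin.val_last, ih]
    rw [← Real.rpow_add hb]
    congr 1
    push_cast
    ring

theorem besselKernelScale_mul_eq (α : ℝ) {M : ℝ} (hM : 0 < M) (k : ℕ) :
    besselKernelScale α M * (besselCliffordCoeff α k ^ 2 * (((2 * M) ^ 2)⁻¹ ^ k) ^ 2) =
      (2 ^ (2 * α - 1 + 4 * k) * M ^ (2 * α + 2 + 4 * k) *
        (Real.Gamma (k + 1) ^ 2 * Real.Gamma (k + 1 + α) ^ 2))⁻¹ := by
  have hexp (b : ℝ) : b ^ (4 * (k : ℝ)) = (b ^ 2) ^ k * (b ^ 2) ^ k := by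
    rw [← pow_add, ← pow_mul, ← Real.rpow_natCast]
    congr 1
    push_cast
    ring
  rw [besselKernelScale, Real.rpow_add two_pos, Real.rpow_sub_one two_ne_zero, Real.rpow_add hM,
    Real.rpow_add hM, Real.rpow_two, hexp 2, hexp M, Real.mul_rpow zero_le_two hM.le,
    besselCliffordCoeff, Real.Gamma_nat_eq_factorial, add_right_comm (k : ℝ) 1 α, mul_pow 2 M 2,
    inv_pow _ k, mul_pow (2 ^ 2)]
  field_simp

theorem det_tsum_mul_div_pow {ι : Type*} (w v : ι → ℝ) (d : ℝ) (N : ℕ) :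
    (of fun k l : Fin N => ∑' n, w n * (v n / d) ^ (k + l : ℕ)).det =
      (∏ k : Fin N, (d⁻¹ ^ (k : ℕ)) ^ 2) *
        (of fun k l : Fin N => ∑' n, w n * v n ^ (k + l : ℕ)).det := by
  have hentry (k l : Fin N) : ∑' n, w n * (v n / d) ^ (k + l : ℕ) =
      d⁻¹ ^ (k : ℕ) * d⁻¹ ^ (l : ℕ) * ∑' n, w n * v n ^ (k + l : ℕ) := by
    rw [← tsum_mul_left]
    exact tsum_congr fun n => by ring
  simp_rw [hentry, sq, Finset.prod_mul_distrib]
  exact det_of_mul_mul_apply _ _ (of fun k l : Fin N => ∑' n, w n * v n ^ (k + l : ℕ))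

variable {α M : ℝ} {ι : Type*} {z : ι → ℝ}

theorem det_besselKernel_eq (α : ℝ) (hM : 0 < M) (hz : ∀ n, 0 < z n) (ρ : ι → ℝ) {N : ℕ}
    {x y : Fin N → ℝ} (hx : ∀ i, 0 < x i) (hy : ∀ j, 0 < y j) :
    (of fun i j => besselKernel α M z ρ (x i) (y j)).det =
      (∏ k, y k ^ (2 * α + 1)) * (besselKernelScale α M ^ N *
        (of fun i j => ∑' n, z n ^ (2 * α) * ρ n *
          besselClifford α (-(z n ^ 2 / (2 * M) ^ 2) * x i ^ 2) *
          besselClifford α (-(z n ^ 2 / (2 * M) ^ 2) * y j ^ 2)).det) := by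
  simp_rw [besselKernel_eq α hM hz ρ (hx _) (hy _)]
  refine (det_of_mul_mul_apply (fun _ => besselKernelScale α M)
    (fun j => y j ^ (2 * α + 1)) (of fun i j => ∑' n, z n ^ (2 * α) * ρ n *
      besselClifford α (-(z n ^ 2 / (2 * M) ^ 2) * x i ^ 2) *
      besselClifford α (-(z n ^ 2 / (2 * M) ^ 2) * y j ^ 2))).trans ?_
  rw [Fin.prod_const]
  ring

theorem besselKernelScale_pow_mul_prod_eq (α : ℝ) (hM : 0 < M) (N : ℕ) :
    besselKernelScale α M ^ N * ((∏ k : Fin N, besselCliffordCoeff α k ^ 2) *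
        ∏ k : Fin N, (((2 * M) ^ 2)⁻¹ ^ (k : ℕ)) ^ 2) =
      (2 ^ ((N : ℝ) * (2 * N + 2 * α - 3)) * M ^ (2 * N * (N + α)) *
        ∏ k : Fin N, (Real.Gamma ((k : ℕ) + 1) ^ 2 * Real.Gamma ((k : ℕ) + 1 + α) ^ 2))⁻¹ := by
  have hexp_two : (N : ℝ) * (2 * N + 2 * α - 3) = N * (2 * N + (2 * α - 1) - 2) := by ring
  have hexp_M : 2 * N * (N + α) = N * (2 * N + (2 * α + 2) - 2) := by ring
  rw [hexp_two, hexp_M, ← prod_rpow_add_four_mul two_pos, ← prod_rpow_add_four_mul hM,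
    ← Fin.prod_const]
  simp_rw [← Finset.prod_mul_distrib, besselKernelScale_mul_eq α hM, Finset.prod_inv_distrib]

theorem tendsto_det_besselKernel_div (hα : -1 < α) (hM : 0 < M) (hz : ∀ n, 0 < z n) {ρ : ι → ℝ}
    (hsum : ∀ k : ℕ, Summable fun n => z n ^ (2 * α) * ρ n * (z n ^ 2) ^ k) (N : ℕ) :
    Tendsto (fun p : (Fin N → ℝ) × (Fin N → ℝ) =>
        (of fun i j => besselKernel α M z ρ (p.1 i) (p.2 j)).det /
        ((∏ k, p.2 k ^ (2 * α + 1)) * vandermondeProd (fun k => p.1 k ^ 2) *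
          vandermondeProd (fun k => p.2 k ^ 2)))
      (𝓝[distinctTuples N (Set.Ioi 0) ×ˢ distinctTuples N (Set.Ioi 0)] (0, 0))
      (𝓝 ((2 ^ ((N : ℝ) * (2 * N + 2 * α - 3)) * M ^ (2 * N * (N + α)) *
          ∏ k : Fin N, (Real.Gamma ((k : ℕ) + 1) ^ 2 * Real.Gamma ((k : ℕ) + 1 + α) ^ 2))⁻¹ *
        (of fun k l : Fin N =>
          ∑' n, z n ^ (2 * α) * ρ n * (z n ^ 2) ^ (k + l : ℕ)).det)) := by
  have hsum' (k : ℕ) : Summable fun n => z n ^ (2 * α) * ρ n * (z n ^ 2 / (2 * M) ^ 2) ^ k := by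
    simpa only [div_pow, mul_div_assoc] using (hsum k).div_const (((2 * M) ^ 2) ^ k)
  have hsq := (tendsto_sq_distinctTuples N).prodMap (tendsto_sq_distinctTuples N)
  rw [← nhdsWithin_prod_eq, ← nhdsWithin_prod_eq] at hsq
  have hlim := ((tendsto_det_tsum_besselClifford_div_vandermondeProd hα N
    (fun n => by positivity) hsum').comp hsq).const_mul (besselKernelScale α M ^ N)
  rw [det_tsum_mul_div_pow, ← mul_assoc, ← mul_assoc, mul_assoc (_ ^ N),
    besselKernelScale_pow_mul_prod_eq α hM] at hlim
  refine hlim.congr' ?_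
  filter_upwards [self_mem_nhdsWithin] with p ⟨hx, hy⟩
  have hy_prod : ∏ k, p.2 k ^ (2 * α + 1) ≠ 0 :=
    (Finset.prod_pos fun k _ => Real.rpow_pos_of_pos (hy.2 k) _).ne'
  rw [det_besselKernel_eq α hM hz ρ hx.2 hy.2, mul_assoc (∏ k, _), mul_div_mul_left _ _ hy_prod,
    mul_div_assoc]
  rfl

end BesselKernel

theorem stmt_16_general {ι : Type*} {α M : ℝ} (hα : -1 < α) (hM : 0 < M) {z ρ : ι → ℝ}
    (hz : ∀ n, 0 < z n) (hsum : ∀ k : ℕ, Summable fun n => z n ^ (2 * α + 2 * k) * ρ n) (N : ℕ) :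
    (Summable fun n : Fin N → ι =>
      |(∏ s, z (n s) ^ (2 * α) * ρ (n s)) * (vandermondeProd fun s => z (n s) ^ 2) ^ 2|) ∧
    Tendsto
      (fun p : (Fin N → ℝ) × (Fin N → ℝ) =>
        (Matrix.of fun i j => besselKernel α M z ρ (p.1 i) (p.2 j)).det /
        ((∏ k, p.2 k ^ (2 * α + 1)) * vandermondeProd (fun k => p.1 k ^ 2) *
          vandermondeProd (fun k => p.2 k ^ 2)))
      (nhdsWithin (0, 0) (distinctTuples N (Set.Ioi 0) ×ˢ distinctTuples N (Set.Ioi 0)))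
      (nhds ((Nat.factorial N * 2 ^ ((N : ℝ) * (2 * N + 2 * α - 3)) * M ^ (2 * N * (N + α)) *
          ∏ k : Fin N, (Real.Gamma ((k : ℕ) + 1) ^ 2 * Real.Gamma ((k : ℕ) + 1 + α) ^ 2))⁻¹ *
        ∑' n : Fin N → ι, (∏ s, z (n s) ^ (2 * α) * ρ (n s)) *
          (vandermondeProd fun s => z (n s) ^ 2) ^ 2)) := by
  have hsum_sq (k : ℕ) : Summable fun n => z n ^ (2 * α) * ρ n * (z n ^ 2) ^ k :=
    (hsum k).congr fun n => by
      rw [Real.rpow_add (hz n), Real.rpow_mul_natCast (hz n).le, Real.rpow_two, mul_right_comm]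
  have handreief := hasSum_prod_mul_vandermondeProd_sq (N := N) hsum_sq
  refine ⟨handreief.summable.abs, ?_⟩
  convert tendsto_det_besselKernel_div hα hM hz hsum_sq N using 2
  rw [handreief.tsum_eq]
  field_simp

theorem stmt_16 (α : ℝ) (hα : -1 < α) (N : ℕ) (hN : 1 ≤ N) (M : ℝ) (hM : 0 < M)
    (z : ℕ → ℝ) (hzmono : StrictMono z) (hzpos : ∀ n, 0 < z n)
    (ρ : ℕ → ℝ) (hρpos : ∀ n, 0 < ρ n)
    (hsum : ∀ k : ℕ, Summable fun n : ℕ => z n ^ k * ρ n) :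
    (Summable fun n : Fin N → ℕ =>
      |(∏ s : Fin N, z (n s) ^ (2 * α) * ρ (n s)) *
        (vandermondeProd fun s : Fin N => z (n s) ^ 2) ^ 2|) ∧
    Filter.Tendsto
      (fun p : (Fin N → ℝ) × (Fin N → ℝ) =>
        (Matrix.of fun i j : Fin N =>
          ∑' n : ℕ, (2 / M ^ 2) * ((p.2 j) ^ (α + 1) / (p.1 i) ^ α) *
            besselJ α (z n * p.1 i / M) * besselJ α (z n * p.2 j / M) * ρ n).det /
          ((∏ k : Fin N, (p.2 k) ^ (2 * α + 1)) *
            vandermondeProd (fun k : Fin N => (p.1 k) ^ 2) *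
            vandermondeProd (fun k : Fin N => (p.2 k) ^ 2)))
      (nhdsWithin (0, 0)
        {p : (Fin N → ℝ) × (Fin N → ℝ) |
          (Function.Injective p.1 ∧ ∀ i, 0 < p.1 i) ∧
            (Function.Injective p.2 ∧ ∀ i, 0 < p.2 i)})
      (nhds (((Nat.factorial N : ℝ) *
          (2 : ℝ) ^ ((N : ℝ) * (2 * (N : ℝ) + 2 * α - 3)) *
          M ^ (2 * (N : ℝ) * ((N : ℝ) + α)) *
          ∏ k : Fin N, (Real.Gamma ((k : ℕ) + 1) ^ 2 * Real.Gamma (((k : ℕ) + 1 : ℝ) + α) ^ 2))⁻¹ *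
        ∑' n : Fin N → ℕ,
          (∏ s : Fin N, z (n s) ^ (2 * α) * ρ (n s)) *
            (vandermondeProd fun s : Fin N => z (n s) ^ 2) ^ 2)) := by
  exact stmt_16_general hα hM hzpos (fun k => summable_rpow_mul_of_summable_pow_mul (hzpos 0)
    (fun n => hzmono.monotone (Nat.zero_le n)) hsum (2 * α + 2 * k)) N
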